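/- Let Λ' = {ε, 0, 01, 0102, 010201, 012, 0120, 01210, 0123, 01230, 012301}. Then for every v ∈ Λ' and every a that is either the empty word ε or a letter of A different from the last letter l(v) of v (any a ∈ A ∪ {ε} when v = ε), the number of letters b ∈ A such that vab contains no square of period at most 4 as a factor and Λ(vab) ∈ Λ' is at least 4. -/

import Mathlib

open scoped Classical

/-- `w` contains a factor that is a square of period between `lo` and `hi`. -/
def HasSq {A : Type*} (lo hi : ℕ) (w : List A) : Prop :=
  ∃ u : List A, lo ≤ u.length ∧ u.length ≤ hi ∧ (u ++ u) <:+: w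

/-- `w` is a square of period between `lo` and `hi`. -/
def IsSq {A : Type*} (lo hi : ℕ) (w : List A) : Prop :=
  ∃ u : List A, lo ≤ u.length ∧ u.length ≤ hi ∧ w = u ++ u

/-- `w` is a minimal square of period between `lo` and `hi`: it is such a square and no
proper factor of it is such a square. -/
def MinSq {A : Type*} (lo hi : ℕ) (w : List A) : Prop :=
  IsSq lo hi w ∧ ∀ f : List A, f <:+: w → f ≠ w → ¬ IsSq lo hi f

/-- A word is normalized if it is lexicographically least among its images under
permutations of the alphabet. -/
def Normalized {A : Type*} [LinearOrder A] (w : List A) : Prop :=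
  ∀ π : Equiv.Perm A, ¬ List.Lex (· < ·) (w.map π) w

/-- `Λ`: the set of normalized words that are proper prefixes of minimal squares of
period between `lo` and `hi`. -/
def Lam {A : Type*} [LinearOrder A] (lo hi : ℕ) : Set (List A) :=
  {w | Normalized w ∧ ∃ s : List A, MinSq lo hi s ∧ w <+: s ∧ w ≠ s}

/-- `Λ(w)`: the longest element of `Λ` that is, up to a permutation of the alphabet,
a suffix of `w`. -/
noncomputable def lamOf {A : Type*} [LinearOrder A] (lo hi : ℕ) (w : List A) : List A :=
  if h : ∃ v : List A,
      (v ∈ Lam lo hi ∧ ∃ π : Equiv.Perm A, v.map π <:+ w) ∧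
      ∀ v' : List A, (v' ∈ Lam lo hi ∧ ∃ π : Equiv.Perm A, v'.map π <:+ w) →
        v'.length ≤ v.length
  then h.choose else []

/-- The subset `Λ' = {ε, 0, 01, 0102, 010201, 012, 0120, 01210, 0123, 01230, 012301}`
of `Λ` (over `Fin 7`, `p = 4`). -/
def LamP : Set (List (Fin 7)) :=
  {[], [0], [0, 1], [0, 1, 0, 2], [0, 1, 0, 2, 0, 1], [0, 1, 2], [0, 1, 2, 0],
   [0, 1, 2, 1, 0], [0, 1, 2, 3], [0, 1, 2, 3, 0], [0, 1, 2, 3, 0, 1]}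

/-- the word starts with a square of period `q` -/
def sqPre (q : ℕ) (l : List (Fin 7)) : Bool :=
  decide (2 * q ≤ l.length) && decide (l.take q = (l.drop q).take q)

/-- Boolean version of `HasSq 1 4`. -/
def hasSqB : List (Fin 7) → Bool
  | [] => false
  | a :: l => sqPre 1 (a :: l) || sqPre 2 (a :: l) || sqPre 3 (a :: l) || sqPre 4 (a :: l)
      || hasSqB l

theorem sqPre_iff (q : ℕ) (l : List (Fin 7)) :
    sqPre q l = true ↔ ∃ u : List (Fin 7), u.length = q ∧ u ++ u <+: l := by
  unfold sqPre
  simp only [Bool.and_eq_true, decide_eq_true_eq]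
  constructor
  · rintro ⟨h1, h2⟩
    refine ⟨l.take q, by simp; omega, (l.drop q).drop q, ?_⟩
    nth_rw 2 [h2]
    simp only [List.append_assoc, List.take_append_drop]
  · rintro ⟨u, rfl, t, rfl⟩
    refine ⟨by simp; omega, by simp [List.append_assoc]⟩

theorem hasSqB_iff (w : List (Fin 7)) : hasSqB w = true ↔ HasSq 1 4 w := by
  induction w with
  | nil =>
    simp only [hasSqB, HasSq]
    constructor
    · intro h; cases h
    · rintro ⟨u, h1, -, h⟩
      have := h.length_le
      simp at this
      subst this
      simp at h1
  | cons a l ih =>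
    simp only [hasSqB, Bool.or_eq_true, sqPre_iff, ih]
    constructor
    · rintro ((((⟨u, h, hp⟩ | ⟨u, h, hp⟩) | ⟨u, h, hp⟩) | ⟨u, h, hp⟩) | ⟨u, h1, h2, hp⟩)
      · exact ⟨u, by omega, by omega, hp.isInfix⟩
      · exact ⟨u, by omega, by omega, hp.isInfix⟩
      · exact ⟨u, by omega, by omega, hp.isInfix⟩
      · exact ⟨u, by omega, by omega, hp.isInfix⟩
      · exact ⟨u, h1, h2, hp.trans (List.suffix_cons a l).isInfix⟩
    · rintro ⟨u, h1, h2, hp⟩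
      rcases List.infix_cons_iff.1 hp with hp | hp
      · have : u.length = 1 ∨ u.length = 2 ∨ u.length = 3 ∨ u.length = 4 := by omega
        rcases this with h | h | h | h
        · exact Or.inl (Or.inl (Or.inl (Or.inl ⟨u, h, hp⟩)))
        · exact Or.inl (Or.inl (Or.inl (Or.inr ⟨u, h, hp⟩)))
        · exact Or.inl (Or.inl (Or.inr ⟨u, h, hp⟩))
        · exact Or.inl (Or.inr ⟨u, h, hp⟩)
      · exact Or.inr ⟨u, h1, h2, hp⟩

theorem minSq_of (u : List (Fin 7)) (h1 : 1 ≤ u.length) (h2 : u.length ≤ 4)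
    (ht : hasSqB (u ++ u).tail = false) (hd : hasSqB (u ++ u).dropLast = false) :
    MinSq 1 4 (u ++ u) := by
  refine ⟨⟨u, h1, h2, rfl⟩, ?_⟩
  rintro f ⟨p, t, hpt⟩ hne ⟨x, hx1, hx2, rfl⟩
  have ht' : ¬ HasSq 1 4 (u ++ u).tail := by rw [← hasSqB_iff, ht]; simp
  have hd' : ¬ HasSq 1 4 (u ++ u).dropLast := by rw [← hasSqB_iff, hd]; simp
  cases p with
  | cons a p =>
    apply ht'
    rw [← hpt]
    exact ⟨x, hx1, hx2, p, t, by simp⟩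
  | nil =>
    rcases List.eq_nil_or_concat t with rfl | ⟨t, b, rfl⟩
    · exact hne (by simpa using hpt)
    · apply hd'
      rw [← hpt]
      refine ⟨x, hx1, hx2, [], t, ?_⟩
      simp only [List.nil_append, List.concat_eq_append]
      rw [← List.append_assoc (x ++ x) t [b], List.dropLast_concat]

/-- necessary condition for being a proper prefix of a minimal square, at period `q` -/
def prefQ (q : ℕ) (s : List (Fin 7)) : Bool :=
  decide (s.length < q) ||
    (decide (s.length < 2 * q) && (s.drop q).isPrefixOf s
      && !hasSqB (s.take q ++ s.take q).tail)

/-- necessary condition for being a proper prefix of a minimal square -/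
def prefB (s : List (Fin 7)) : Bool := prefQ 1 s || prefQ 2 s || prefQ 3 s || prefQ 4 s

theorem prefQ_of (u s : List (Fin 7)) (hm : MinSq 1 4 (u ++ u)) (hp : s <+: u ++ u)
    (hne : s ≠ u ++ u) (h1 : 1 ≤ u.length) : prefQ u.length s = true := by
  unfold prefQ
  by_cases hl : s.length < u.length
  · simp [hl]
  have hus : u <+: s := List.prefix_of_prefix_length_le (List.prefix_append u u) hp (by omega)
  obtain ⟨r, rfl⟩ := hus
  have hr : r <+: u := (List.prefix_append_right_inj u).1 hp
  have hlt : (u ++ r).length < 2 * u.length := by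
    have := hp.length_le
    rcases Nat.lt_or_ge (u ++ r).length (2 * u.length) with h | h
    · exact h
    · exact absurd (hp.eq_of_length (by simp at *; omega)) hne
  have hsq : hasSqB (u ++ u).tail = false := by
    by_contra hc
    rw [Bool.not_eq_false, hasSqB_iff] at hc
    obtain ⟨x, hx1, hx2, hx⟩ := hc
    refine hm.2 (x ++ x) (hx.trans (List.tail_suffix _).isInfix) ?_ ⟨x, hx1, hx2, rfl⟩
    intro he
    have := hx.length_le
    rw [he] at this
    simp at this
    omega
  have hpre : r <+: u ++ r := hr.trans (List.prefix_append u r)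
  simp [hsq, hpre]
  simp at hlt
  omega

theorem prefB_of (s z : List (Fin 7)) (hm : MinSq 1 4 z) (hp : s <+: z) (hne : s ≠ z) :
    prefB s = true := by
  obtain ⟨u, h1, h2, rfl⟩ := hm.1
  have h := prefQ_of u s hm hp hne h1
  have : u.length = 1 ∨ u.length = 2 ∨ u.length = 3 ∨ u.length = 4 := by omega
  unfold prefB
  rcases this with h' | h' | h' | h' <;> rw [h'] at h <;> simp [h]

theorem isSq_map (π : Equiv.Perm (Fin 7)) {w : List (Fin 7)} (h : IsSq 1 4 w) :
    IsSq 1 4 (w.map π) := by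
  obtain ⟨u, h1, h2, rfl⟩ := h
  exact ⟨u.map π, by simpa, by simpa, by simp⟩

theorem map_symm_map (π : Equiv.Perm (Fin 7)) (w : List (Fin 7)) :
    (w.map π).map π.symm = w := by
  simp

theorem minSq_map (π : Equiv.Perm (Fin 7)) {w : List (Fin 7)} (h : MinSq 1 4 w) :
    MinSq 1 4 (w.map π) := by
  refine ⟨isSq_map π h.1, fun f hf hne hsq => ?_⟩
  refine h.2 (f.map π.symm) ?_ ?_ (isSq_map π.symm hsq)
  · have := hf.map π.symm
    rwa [map_symm_map] at this
  · intro he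
    apply hne
    rw [← he]
    simp

theorem prefB_of_lam (x : List (Fin 7)) (π : Equiv.Perm (Fin 7)) (hx : x ∈ Lam 1 4) :
    prefB (x.map π) = true := by
  obtain ⟨-, z, hz, hp, hne⟩ := hx
  refine prefB_of _ (z.map π) (minSq_map π hz) (hp.map π) ?_
  intro he
  exact hne (List.map_injective_iff.2 π.injective he)

theorem lex_total (a b : List (Fin 7)) (h1 : ¬ List.Lex (· < ·) a b)
    (h2 : ¬ List.Lex (· < ·) b a) : a = b := by
  have h1' : ¬ a < b := h1
  have h2' : ¬ b < a := h2
  exact le_antisymm (not_lt.1 h2') (not_lt.1 h1')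

theorem normalized_unique (x y : List (Fin 7)) (hx : Normalized x) (hy : Normalized y)
    (π σ : Equiv.Perm (Fin 7)) (h : x.map π = y.map σ) : x = y := by
  apply lex_total
  · have : (y.map (π.symm * σ : Equiv.Perm (Fin 7))) = x := by
      have := congrArg (List.map π.symm) h
      rw [map_symm_map] at this
      rw [this]
      simp
    have h' := hy (π.symm * σ)
    rwa [this] at h'
  · have : (x.map (σ.symm * π : Equiv.Perm (Fin 7))) = y := by
      have := congrArg (List.map σ.symm) h
      rw [map_symm_map] at this
      rw [← this]
      simp
    have h' := hx (σ.symm * π)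
    rwa [this] at h'

/-- The set LamP as a list of words. -/
def LPL : List (List (Fin 7)) :=
  [[], [0], [0, 1], [0, 1, 0, 2], [0, 1, 0, 2, 0, 1], [0, 1, 2], [0, 1, 2, 0],
   [0, 1, 2, 1, 0], [0, 1, 2, 3], [0, 1, 2, 3, 0], [0, 1, 2, 3, 0, 1]]

theorem mem_LPL (v : List (Fin 7)) : v ∈ LamP ↔ v ∈ LPL := by
  simp [LamP, LPL]

theorem lam_of (x u : List (Fin 7)) (hn : Normalized x) (h1 : 1 ≤ u.length)
    (h2 : u.length ≤ 4)
    (ht : hasSqB (u ++ u).tail = false) (hd : hasSqB (u ++ u).dropLast = false)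
    (hp : x <+: u ++ u) (hne : x ≠ u ++ u) : x ∈ Lam 1 4 :=
  ⟨hn, u ++ u, minSq_of u h1 h2 ht hd, hp, hne⟩

theorem normalized_prefix (x y : List (Fin 7)) (h : Normalized (x ++ y)) : Normalized x := by
  intro π hl
  apply h π
  rw [List.map_append]
  have : ∀ a b c d : List (Fin 7), a.length = b.length → List.Lex (· < ·) a b →
      List.Lex (· < ·) (a ++ c) (b ++ d) := by
    intro a b c d hab hl
    induction hl with
    | nil => simp at hab
    | cons _ ih => exact List.Lex.cons (ih (by simpa using hab))
    | rel h => exact List.Lex.rel h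
  exact this _ _ _ _ (by simp) hl

theorem norm_aux : ∀ a b c d : Fin 7, a ≠ b → a ≠ c → a ≠ d → b ≠ c → b ≠ d → c ≠ d →
    (¬ (a < 0)) ∧ (a = 0 → ¬ (b < 1)) ∧ (a = 0 → b = 1 → ¬ (c < 2)) ∧
    (a = 0 → b = 1 → c = 2 → ¬ (d < 3)) := by
  intro a b c d
  omega

theorem norm_all (π : Equiv.Perm (Fin 7)) :
    (¬ (π 0 < 0)) ∧ (π 0 = 0 → ¬ (π 1 < 1)) ∧ (π 0 = 0 → π 1 = 1 → ¬ (π 2 < 2)) ∧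
    (π 0 = 0 → π 1 = 1 → π 2 = 2 → ¬ (π 3 < 3)) := by
  apply norm_aux <;> exact fun h => absurd (π.injective h) (by decide)

theorem lexc (a b : Fin 7) (l m : List (Fin 7)) :
    List.Lex (· < ·) (a :: l) (b :: m) ↔ a < b ∨ a = b ∧ List.Lex (· < ·) l m := by
  constructor
  · intro h
    cases h with
    | cons h => exact Or.inr ⟨rfl, h⟩
    | rel h => exact Or.inl h
  · rintro (h | ⟨rfl, h⟩)
    · exact List.Lex.rel h
    · exact List.Lex.cons h

theorem lexn : List.Lex (· < ·) ([] : List (Fin 7)) [] ↔ False := by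
  constructor
  · intro h; cases h
  · exact False.elim

theorem norm1 : Normalized ([0, 1, 0, 2, 0, 1] : List (Fin 7)) := by
  intro π h
  obtain ⟨h0, h1, h2, h3⟩ := norm_all π
  simp only [List.map_cons, List.map_nil, lexc, lexn] at h
  grind

theorem norm2 : Normalized ([0, 1, 2, 0] : List (Fin 7)) := by
  intro π h
  obtain ⟨h0, h1, h2, h3⟩ := norm_all π
  simp only [List.map_cons, List.map_nil, lexc, lexn] at h
  grind

theorem norm3 : Normalized ([0, 1, 2, 1, 0] : List (Fin 7)) := by
  intro π h
  obtain ⟨h0, h1, h2, h3⟩ := norm_all π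
  simp only [List.map_cons, List.map_nil, lexc, lexn] at h
  grind

theorem norm4 : Normalized ([0, 1, 2, 3, 0, 1] : List (Fin 7)) := by
  intro π h
  obtain ⟨h0, h1, h2, h3⟩ := norm_all π
  simp only [List.map_cons, List.map_nil, lexc, lexn] at h
  grind

theorem LPL_lam : ∀ v ∈ LPL, v ∈ Lam 1 4 := by
  intro v hv
  simp only [LPL, List.mem_cons, List.not_mem_nil, or_false] at hv
  rcases hv with rfl | rfl | rfl | rfl | rfl | rfl | rfl | rfl | rfl | rfl | rfl
  · exact lam_of _ [0] (normalized_prefix _ _ norm1) (by decide) (by decide) (by decide)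
      (by decide) (by decide) (by decide)
  · exact lam_of _ [0] (normalized_prefix [0] _ norm1) (by decide) (by decide) (by decide)
      (by decide) (by decide) (by decide)
  · exact lam_of _ [0, 1] (normalized_prefix [0, 1] _ norm1) (by decide) (by decide)
      (by decide) (by decide) (by decide) (by decide)
  · exact lam_of _ [0, 1, 0, 2] (normalized_prefix [0, 1, 0, 2] _ norm1) (by decide) (by decide)
      (by decide) (by decide) (by decide) (by decide)
  · exact lam_of _ [0, 1, 0, 2] norm1 (by decide) (by decide)
      (by decide) (by decide) (by decide) (by decide)
  · exact lam_of _ [0, 1, 2] (normalized_prefix [0, 1, 2] _ norm2) (by decide) (by decide)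
      (by decide) (by decide) (by decide) (by decide)
  · exact lam_of _ [0, 1, 2] norm2 (by decide) (by decide)
      (by decide) (by decide) (by decide) (by decide)
  · exact lam_of _ [0, 1, 2, 1] norm3 (by decide) (by decide)
      (by decide) (by decide) (by decide) (by decide)
  · exact lam_of _ [0, 1, 2, 3] (normalized_prefix [0, 1, 2, 3] _ norm4) (by decide) (by decide)
      (by decide) (by decide) (by decide) (by decide)
  · exact lam_of _ [0, 1, 2, 3] (normalized_prefix [0, 1, 2, 3, 0] _ norm4) (by decide)
      (by decide) (by decide) (by decide) (by decide) (by decide)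
  · exact lam_of _ [0, 1, 2, 3] norm4 (by decide) (by decide)
      (by decide) (by decide) (by decide) (by decide)

/-- append the letters not yet present in the accumulator -/
def addNew : List (Fin 7) → List (Fin 7) → List (Fin 7)
  | acc, [] => acc
  | acc, a :: l => if a ∈ acc then addNew acc l else addNew (acc ++ [a]) l

/-- all letters, in the order of first occurrence in `t` -/
def order (t : List (Fin 7)) : List (Fin 7) := addNew [] (t ++ [0, 1, 2, 3, 4, 5, 6])

/-- the renaming determined by an ordering of the letters -/
def ren (o : List (Fin 7)) (i : Fin 7) : Fin 7 := o.getD i.val 0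

/-- `t` is a renaming of `v` -/
def matchB (v t : List (Fin 7)) : Bool :=
  decide (v.map (ren (order t)) = t) && decide (order t).Nodup
    && decide ((order t).length = 7)

theorem matchB_perm (v t : List (Fin 7)) (h : matchB v t = true) :
    ∃ π : Equiv.Perm (Fin 7), v.map π = t := by
  simp only [matchB, Bool.and_eq_true, decide_eq_true_eq] at h
  obtain ⟨⟨h1, h2⟩, h3⟩ := h
  have hinj : Function.Injective (ren (order t)) := by
    intro i j hij
    unfold ren at hij
    rw [List.getD_eq_getElem _ _ (by omega), List.getD_eq_getElem _ _ (by omega)] at hij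
    exact Fin.ext ((List.Nodup.getElem_inj_iff h2).1 hij)
  exact ⟨Equiv.ofBijective _ (Finite.injective_iff_bijective.1 hinj), by simpa using h1⟩

/-- the longest admissible suffix is a renaming of a word of LamP -/
def chk : List (Fin 7) → Bool
  | [] => true
  | a :: l => if prefB (a :: l) then LPL.any (fun v => matchB v (a :: l)) else chk l

theorem chk_spec (w : List (Fin 7)) (h : chk w = true) :
    ∃ v ∈ LPL, ∃ π : Equiv.Perm (Fin 7), v.map π <:+ w ∧
      ∀ s, s <:+ w → v.length < s.length → ¬ prefB s = true := by
  induction w with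
  | nil =>
    refine ⟨[], by simp [LPL], 1, by simp, ?_⟩
    intro s hs hl
    have := hs.length_le
    simp only [List.length_nil] at this hl
    omega
  | cons a l ih =>
    unfold chk at h
    split_ifs at h with hp
    · obtain ⟨v, hv, hm⟩ := List.any_eq_true.1 h
      obtain ⟨π, hπ⟩ := matchB_perm _ _ hm
      refine ⟨v, hv, π, by rw [hπ], ?_⟩
      intro s hs hl
      have h1 := hs.length_le
      have h2 := congrArg List.length hπ
      rw [List.length_map] at h2
      omega
    · obtain ⟨v, hv, π, hs, hall⟩ := ih h
      refine ⟨v, hv, π, hs.trans (List.suffix_cons a l), ?_⟩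
      intro s hs' hl
      rcases List.suffix_cons_iff.1 hs' with rfl | hs'
      · exact hp
      · exact hall s hs' hl

theorem lamOf_mem (w : List (Fin 7)) (h : chk w = true) : lamOf 1 4 w ∈ LamP := by
  obtain ⟨v, hv, π, hs, hall⟩ := chk_spec w h
  have hvL := LPL_lam v hv
  have hex : ∃ v : List (Fin 7),
      (v ∈ Lam 1 4 ∧ ∃ π : Equiv.Perm (Fin 7), v.map π <:+ w) ∧
      ∀ v' : List (Fin 7), (v' ∈ Lam 1 4 ∧ ∃ π : Equiv.Perm (Fin 7), v'.map π <:+ w) →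
        v'.length ≤ v.length := by
    refine ⟨v, ⟨hvL, π, hs⟩, ?_⟩
    rintro v' ⟨hv', σ, hσ⟩
    by_contra hlt
    exact hall _ hσ (by simpa using hlt) (prefB_of_lam v' σ hv')
  unfold lamOf
  rw [dif_pos hex]
  obtain ⟨⟨hx, σ, hσ⟩, hmax⟩ := hex.choose_spec
  set x := hex.choose
  have h1 : v.length ≤ x.length := hmax v ⟨hvL, π, hs⟩
  have h2 : x.length ≤ v.length := by
    by_contra hlt
    exact hall _ hσ (by simpa using hlt) (prefB_of_lam x σ hx)
  have he : x.map σ = v.map π :=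
    (List.suffix_of_suffix_length_le hσ hs (by simpa using h2)).eq_of_length
      (by simp; omega)
  rw [normalized_unique x v hx.1 hvL.1 σ π he]
  exact (mem_LPL v).2 hv

/-- the computable form of the condition on `vab` -/
def good (w : List (Fin 7)) : Bool := !hasSqB w && chk w

/-- the choices of `a` -/
def opts : List (Option (Fin 7)) :=
  [none, some 0, some 1, some 2, some 3, some 4, some 5, some 6]

theorem mem_opts (a : Option (Fin 7)) : a ∈ opts := by
  revert a; decide

theorem main_check :
    (LPL.all fun v => opts.all fun a =>
      (v.isEmpty || !decide (a ≠ v.getLast?)) && !v.isEmpty ||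
      decide (4 ≤ (([0, 1, 2, 3, 4, 5, 6] : List (Fin 7)).filter
        fun b => good (v ++ a.toList ++ [b])).length)) = true := by
  decide +kernel

/-- Over `Fin 7` with `p = 4`: for every `v ∈ Λ'` and every `a` that is either the empty
word or a letter different from the last letter of `v` (any `a` when `v = ε`), there are
at least `4` letters `b` such that `vab` contains no square of period at most `4` and
`Λ(vab) ∈ Λ'`. -/
theorem stmt_12 :
    ∀ v ∈ LamP, ∀ a : Option (Fin 7), (v = [] ∨ a ≠ v.getLast?) →
      4 ≤ (Finset.univ.filter fun b : Fin 7 =>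
          ¬ HasSq 1 4 (v ++ a.toList ++ [b]) ∧
          lamOf 1 4 (v ++ a.toList ++ [b]) ∈ LamP).card := by
  intro v hv a ha
  have h := List.all_eq_true.1 (List.all_eq_true.1 main_check v ((mem_LPL v).1 hv)) a (mem_opts a)
  have h4 : 4 ≤ (([0, 1, 2, 3, 4, 5, 6] : List (Fin 7)).filter
        fun b => good (v ++ a.toList ++ [b])).length := by
    rw [Bool.or_eq_true] at h
    rcases h with h | h
    · exfalso
      rcases ha with rfl | ha
      · simp at h
      · rcases v with _ | ⟨c, v⟩
        · simp at h
        · simp [ha] at h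
    · exact of_decide_eq_true h
  refine h4.trans ?_
  have hnd : (([0, 1, 2, 3, 4, 5, 6] : List (Fin 7)).filter
        fun b => good (v ++ a.toList ++ [b])).Nodup :=
    List.Nodup.filter _ (by decide)
  rw [← List.toFinset_card_of_nodup hnd]
  apply Finset.card_le_card
  intro b hb
  rw [List.mem_toFinset, List.mem_filter] at hb
  have hg := hb.2
  simp only [good, Bool.and_eq_true, Bool.not_eq_true'] at hg
  rw [Finset.mem_filter]
  refine ⟨Finset.mem_univ _, ?_, lamOf_mem _ hg.2⟩
  rw [← hasSqB_iff, hg.1]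
  simp
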